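/- Let a, b, c be integers with a, b nonzero and let B be the 4×4 skew-symmetric integer matrix with rows (0, -a, c, -a-c), (a, 0, -c, a+c), (-c, c, 0, -b), (a+c, -a-c, b, 0). Then the gcd of all entries of B is gcd(a, b, c), and the gcd of all 3×3 minors of B is a*b*gcd(a,b,c). Consequently the invariant factors of B are h1, h1, h2, h2 with h1 = gcd(a,b,c) and h2 = a*b/gcd(a,b,c). -/

import Mathlib

/-!
The matrix is congruent to the block matrix `[0, M; -Mᵀ, 0]` with `M = [a, c; 0, b]`, so Smith
normal form `diag(h₁, h₂)` of `M` yields `diag(h₁, h₁, h₂, h₂)` for the whole matrix. Since `a ≠ 0`,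
some row operation turns the first row of `M` into a multiple of a unimodular row by
`h₁ = gcd(a, b, c)`, and the determinant then forces `h₁ h₂ = a b`. The gcds of the entries and of
the minors are invariant under unimodular equivalence (for the minors because the adjugate is
antimultiplicative), so both can be read off the diagonal form.
-/

open Matrix

/-- Two matrices are unimodularly equivalent if they differ by invertible row and column operations;
a Smith normal form is a diagonal representative. Invertibility is encoded by the determinants. -/
def UnimodularEquiv {R m n : Type*} [CommRing R] [Fintype m] [DecidableEq m] [Fintype n]
    [DecidableEq n] (A B : Matrix m n R) : Prop :=
  ∃ (P : Matrix m m R) (Q : Matrix n n R), IsUnit P.det ∧ IsUnit Q.det ∧ P * A * Q = B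

namespace UnimodularEquiv

variable {R m n : Type*} [CommRing R] [Fintype m] [DecidableEq m] [Fintype n] [DecidableEq n]

theorem symm {A B : Matrix m n R} (h : UnimodularEquiv A B) : UnimodularEquiv B A := by
  obtain ⟨P, Q, hP, hQ, rfl⟩ := h
  refine ⟨P⁻¹, Q⁻¹, isUnit_nonsing_inv_det P hP, isUnit_nonsing_inv_det Q hQ, ?_⟩
  rw [Matrix.mul_assoc P, nonsing_inv_mul_cancel_left P _ hP, mul_nonsing_inv_cancel_right Q _ hQ]

theorem trans {A B C : Matrix m n R} (hAB : UnimodularEquiv A B) (hBC : UnimodularEquiv B C) :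
    UnimodularEquiv A C := by
  obtain ⟨P, Q, hP, hQ, rfl⟩ := hAB
  obtain ⟨P', Q', hP', hQ', rfl⟩ := hBC
  refine ⟨P' * P, Q * Q', ?_, ?_, by simp only [Matrix.mul_assoc]⟩
  · simpa only [det_mul] using hP'.mul hP
  · simpa only [det_mul] using hQ.mul hQ'

theorem submatrix {m' n' : Type*} [Fintype m'] [DecidableEq m'] [Fintype n'] [DecidableEq n']
    {A B : Matrix m n R} (h : UnimodularEquiv A B) (e : m' ≃ m) (f : n' ≃ n) :
    UnimodularEquiv (A.submatrix e f) (B.submatrix e f) := by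
  obtain ⟨P, Q, hP, hQ, rfl⟩ := h
  refine ⟨P.submatrix e e, Q.submatrix f f, ?_, ?_, by simp only [submatrix_mul_equiv]⟩
  · rwa [det_submatrix_equiv_self]
  · rwa [det_submatrix_equiv_self]

theorem adjugate {A B : Matrix n n R} (h : UnimodularEquiv A B) :
    UnimodularEquiv A.adjugate B.adjugate := by
  obtain ⟨P, Q, hP, hQ, rfl⟩ := h
  refine ⟨Q.adjugate, P.adjugate, ?_, ?_, ?_⟩
  · simpa only [det_adjugate] using hQ.pow _
  · simpa only [det_adjugate] using hP.pow _
  · simp only [adjugate_mul_distrib, Matrix.mul_assoc]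

theorem fromBlocks_skew {M D : Matrix m n R} (h : UnimodularEquiv M D) :
    UnimodularEquiv (fromBlocks 0 M (-Mᵀ) 0) (fromBlocks 0 D (-Dᵀ) 0) := by
  obtain ⟨P, Q, hP, hQ, rfl⟩ := h
  refine ⟨fromBlocks P 0 0 Qᵀ, fromBlocks Pᵀ 0 0 Q, ?_, ?_, ?_⟩
  · simpa only [det_fromBlocks_zero₂₁, det_transpose] using hP.mul hQ
  · simpa only [det_fromBlocks_zero₂₁, det_transpose] using hP.mul hQ
  · simp [fromBlocks_multiply, transpose_mul, Matrix.mul_assoc]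

theorem fromBlocks_skew_diag (D : Matrix n n R) :
    UnimodularEquiv (fromBlocks 0 D (-Dᵀ) 0) (fromBlocks D 0 0 Dᵀ) := by
  refine ⟨1, Matrix.J n R, by simp, isUnit_det_J n R, ?_⟩
  simp [Matrix.J, fromBlocks_multiply]

theorem dvd_apply {A B : Matrix m n R} (h : UnimodularEquiv A B) {d : R} (hd : ∀ i j, d ∣ A i j)
    (i : m) (j : n) : d ∣ B i j := by
  obtain ⟨P, Q, -, -, rfl⟩ := h
  simp only [Matrix.mul_apply]
  exact Finset.dvd_sum fun k _ => (Finset.dvd_sum fun l _ => (hd l k).mul_left _).mul_right _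

variable [NormalizedGCDMonoid R]

theorem gcd_entries_eq {A B : Matrix m n R} (h : UnimodularEquiv A B) :
    (Finset.univ.gcd fun p : m × n => A p.1 p.2) = Finset.univ.gcd fun p : m × n => B p.1 p.2 := by
  refine dvd_antisymm_of_normalize_eq Finset.normalize_gcd Finset.normalize_gcd
    (Finset.dvd_gcd fun p _ => h.dvd_apply (fun i j => ?_) p.1 p.2)
    (Finset.dvd_gcd fun p _ => h.symm.dvd_apply (fun i j => ?_) p.1 p.2)
  · exact Finset.gcd_dvd (f := fun p : m × n => A p.1 p.2) (Finset.mem_univ (i, j))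
  · exact Finset.gcd_dvd (f := fun p : m × n => B p.1 p.2) (Finset.mem_univ (i, j))

end UnimodularEquiv

section DeterminantalDivisors

variable {R : Type*} [CommRing R] [NormalizedGCDMonoid R]

theorem gcd_univ_eq_normalize {ι : Type*} [Fintype ι] {v : ι → R} {i : ι} (hi : ∀ j, v i ∣ v j) :
    Finset.univ.gcd v = normalize (v i) :=
  dvd_antisymm_of_normalize_eq Finset.normalize_gcd (normalize_idem _)
    (dvd_normalize_iff.2 (Finset.gcd_dvd (Finset.mem_univ i)))
    (normalize_dvd_iff.2 (Finset.dvd_gcd fun j _ => hi j))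

theorem gcd_entries_diagonal {n : Type*} [Fintype n] [DecidableEq n] (v : n → R) :
    (Finset.univ.gcd fun p : n × n => diagonal v p.1 p.2) = Finset.univ.gcd v := by
  refine dvd_antisymm_of_normalize_eq Finset.normalize_gcd Finset.normalize_gcd
    (Finset.dvd_gcd fun i _ => ?_) (Finset.dvd_gcd fun ⟨i, j⟩ _ => ?_)
  · simpa only [diagonal_apply_eq] using
      Finset.gcd_dvd (f := fun p : n × n => diagonal v p.1 p.2) (Finset.mem_univ (i, i))
  · obtain rfl | hij := eq_or_ne i j
    · simpa only [diagonal_apply_eq] using Finset.gcd_dvd (Finset.mem_univ i)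
    · simp only [diagonal_apply_ne v hij, dvd_zero]

theorem gcd_minors_eq_gcd_adjugate {n : ℕ} (A : Matrix (Fin (n + 1)) (Fin (n + 1)) R) :
    (Finset.univ.gcd fun p : Fin (n + 1) × Fin (n + 1) =>
        (A.submatrix p.1.succAbove p.2.succAbove).det) =
      Finset.univ.gcd fun p : Fin (n + 1) × Fin (n + 1) => A.adjugate p.1 p.2 := by
  have dvd_adjugate_iff (d : R) (i j : Fin (n + 1)) :
      d ∣ A.adjugate i j ↔ d ∣ (A.submatrix j.succAbove i.succAbove).det := by
    rw [adjugate_fin_succ_eq_det_submatrix, (isUnit_one.neg.pow (j + i : ℕ)).dvd_mul_left]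
  refine dvd_antisymm_of_normalize_eq Finset.normalize_gcd Finset.normalize_gcd
    (Finset.dvd_gcd fun p _ => (dvd_adjugate_iff _ _ _).2 ?_)
    (Finset.dvd_gcd fun p _ => (dvd_adjugate_iff _ _ _).1 ?_)
  · exact Finset.gcd_dvd (f := fun p : Fin (n + 1) × Fin (n + 1) =>
      (A.submatrix p.1.succAbove p.2.succAbove).det) (Finset.mem_univ p.swap)
  · exact Finset.gcd_dvd (f := fun p : Fin (n + 1) × Fin (n + 1) => A.adjugate p.1 p.2)
      (Finset.mem_univ p.swap)

theorem UnimodularEquiv.gcd_minors_eq {n : ℕ} {A : Matrix (Fin (n + 1)) (Fin (n + 1)) R}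
    {v : Fin (n + 1) → R} (h : UnimodularEquiv A (diagonal v)) :
    (Finset.univ.gcd fun p : Fin (n + 1) × Fin (n + 1) =>
        (A.submatrix p.1.succAbove p.2.succAbove).det) =
      Finset.univ.gcd fun i => ∏ j ∈ Finset.univ.erase i, v j := by
  rw [gcd_minors_eq_gcd_adjugate, h.adjugate.gcd_entries_eq, adjugate_diagonal,
    gcd_entries_diagonal]

theorem UnimodularEquiv.gcd_entries_eq_normalize {n : Type*} [Fintype n] [DecidableEq n]
    {A : Matrix n n R} {v : n → R} (h : UnimodularEquiv A (diagonal v)) {i : n}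
    (hi : ∀ j, v i ∣ v j) : (Finset.univ.gcd fun p : n × n => A p.1 p.2) = normalize (v i) := by
  rw [h.gcd_entries_eq, gcd_entries_diagonal, gcd_univ_eq_normalize hi]

theorem UnimodularEquiv.associated_gcd_minors {A : Matrix (Fin 4) (Fin 4) R} {x y : R}
    (h : UnimodularEquiv A (diagonal ![x, x, y, y])) (hxy : x ∣ y) :
    Associated (Finset.univ.gcd fun p : Fin 4 × Fin 4 =>
      (A.submatrix p.1.succAbove p.2.succAbove).det) (x * y * x) := by
  have prod_erase : (fun i => ∏ j ∈ Finset.univ.erase i, ![x, x, y, y] j) =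
      ![x * y * y, x * y * y, x * y * x, x * y * x] := by
    ext i
    fin_cases i
    · change ∏ j ∈ {1, 2, 3}, ![x, x, y, y] j = x * y * y
      simp [mul_assoc]
    · change ∏ j ∈ {0, 2, 3}, ![x, x, y, y] j = x * y * y
      simp [mul_assoc]
    · change ∏ j ∈ {0, 1, 3}, ![x, x, y, y] j = x * y * x
      simp [mul_comm]
    · change ∏ j ∈ {0, 1, 2}, ![x, x, y, y] j = x * y * x
      simp [mul_comm]
  have dvd_prod : ∀ i, x * y * x ∣ ![x * y * y, x * y * y, x * y * x, x * y * x] i := by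
    simp [Fin.forall_fin_succ, mul_dvd_mul_left, hxy]
  rw [h.gcd_minors_eq, prod_erase, gcd_univ_eq_normalize (i := 2) dvd_prod]
  exact normalize_associated _

end DeterminantalDivisors

section Triangular

variable {R : Type*} [CommRing R]

/-- Adding `t` times the second row makes the first row `g • (a, c + t * b)`, a multiple of a
unimodular row, which column operations move to `(g, 0)`. -/
theorem unimodularEquiv_smul_triangular {a b c t : R} (g : R) (h : IsCoprime a (c + t * b)) :
    UnimodularEquiv !![g * a, g * c; 0, g * b] (diagonal ![g, g * (a * b)]) := by
  obtain ⟨u, v, huv⟩ := h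
  refine ⟨!![1, t; -(v * b), 1 - v * b * t], !![u, -(c + t * b); v, a], ?_, ?_, ?_⟩
  · rw [det_fin_two_of]
    convert isUnit_one using 1
    ring
  · rw [det_fin_two_of]
    convert isUnit_one using 1
    linear_combination huv
  · rw [mul_fin_two, mul_fin_two, diagonal_vec2]
    congrm !![?_, ?_; ?_, ?_]
    · linear_combination g * huv
    · ring
    · linear_combination (-(g * v * b)) * huv
    · ring

variable [IsDomain R] [IsPrincipalIdealRing R]

theorem exists_isCoprime_add_mul {a b c : R} (ha : a ≠ 0)
    (h : ∀ p, Prime p → p ∣ a → p ∣ b → ¬ p ∣ c) : ∃ t, IsCoprime a (c + t * b) := by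
  induction a using WfDvdMonoid.induction_on_irreducible with
  | zero => exact absurd rfl ha
  | unit u hu => exact ⟨0, hu.isRelPrime_left.isCoprime⟩
  | mul a p ha₀ hp ih =>
    obtain ⟨t, ht⟩ := ih ha₀ fun q hq hqa => h q hq (hqa.mul_left p)
    by_cases hpt : p ∣ c + t * b
    · have hpa : ¬ p ∣ a := fun hpa => hp.not_isUnit (ht.isUnit_of_dvd' hpa hpt)
      have hpb : ¬ p ∣ b := fun hpb => h p hp.prime (dvd_mul_right p a) hpb
        ((dvd_add_left (hpb.mul_left t)).1 hpt)
      have shift : c + (t + a) * b = c + t * b + a * b := by ring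
      refine ⟨t + a, shift ▸ IsCoprime.mul_left ?_ (ht.add_mul_left_right b)⟩
      rw [hp.coprime_iff_not_dvd, dvd_add_right hpt]
      exact hp.prime.not_dvd_mul hpa hpb
    · exact ⟨t, ((hp.coprime_iff_not_dvd).2 hpt).mul_left ht⟩

theorem unimodularEquiv_triangular [NormalizedGCDMonoid R] {a b c d : R} (ha : a ≠ 0)
    (hd : gcd (gcd a b) c * d = a * b) :
    UnimodularEquiv !![a, c; 0, b] (diagonal ![gcd (gcd a b) c, d]) := by
  set g := gcd (gcd a b) c
  obtain ⟨a', ha'⟩ : g ∣ a := (gcd_dvd_left _ _).trans (gcd_dvd_left _ _)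
  obtain ⟨b', hb'⟩ : g ∣ b := (gcd_dvd_left _ _).trans (gcd_dvd_right _ _)
  obtain ⟨c', hc'⟩ : g ∣ c := gcd_dvd_right _ _
  have hg₀ : g ≠ 0 := left_ne_zero_of_mul (ha' ▸ ha)
  have no_common_prime (p : R) (hp : Prime p) (hpa : p ∣ a') (hpb : p ∣ b') : ¬ p ∣ c' := by
    intro hpc
    have mul_dvd {x y : R} (hx : x = g * y) (hy : p ∣ y) : g * p ∣ x :=
      hx ▸ mul_dvd_mul_left g hy
    have g_mul_dvd : g * p ∣ g :=
      dvd_gcd (dvd_gcd (mul_dvd ha' hpa) (mul_dvd hb' hpb)) (mul_dvd hc' hpc)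
    exact hp.not_isUnit (isUnit_of_dvd_one ((mul_dvd_mul_iff_left hg₀).1 (by rwa [mul_one])))
  obtain ⟨t, ht⟩ := exists_isCoprime_add_mul (right_ne_zero_of_mul (ha' ▸ ha)) no_common_prime
  have hd' : d = g * (a' * b') :=
    mul_left_cancel₀ hg₀ (by linear_combination hd + b * ha' + g * a' * hb')
  simpa only [← ha', ← hb', ← hc', ← hd'] using unimodularEquiv_smul_triangular g ht

end Triangular

section RelationMatrix

variable {R : Type*} [CommRing R]

/-- The relation matrix of the second quantum Weyl algebra with its derivations erased. -/
def relationMatrix (a b c : R) : Matrix (Fin 4) (Fin 4) R :=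
  !![0, -a, c, -a - c;
     a, 0, -c, a + c;
     -c, c, 0, -b;
     a + c, -a - c, b, 0]

/-- The interleaving of two copies of `Fin 2`, which turns `diag(x, y) ⊕ diag(x, y)` into
`diag(x, x, y, y)`. -/
def interleave : Fin 4 ≃ Fin 2 ⊕ Fin 2 where
  toFun := ![.inl 0, .inr 0, .inl 1, .inr 1]
  invFun := Sum.elim ![0, 2] ![1, 3]
  left_inv := by decide
  right_inv := by decide

/-- In the basis `e₀, -(e₀ + e₁), e₂ + e₃ - e₀ - e₁, e₂` of the underlying alternating form, the
first and third vectors are orthogonal, and so are the second and fourth. -/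
theorem unimodularEquiv_relationMatrix (a b c : R) :
    UnimodularEquiv (relationMatrix a b c)
      ((fromBlocks 0 !![a, c; 0, b] (-!![a, c; 0, b]ᵀ) 0).submatrix interleave interleave) := by
  let S : Matrix (Fin 4) (Fin 4) R := !![1, 0, 0, 0; -1, -1, 0, 0; -1, -1, 1, 1; 0, 0, 1, 0]
  have hS : S.det = 1 := by
    simp [S, det_succ_row_zero, Fin.sum_univ_succ, Fin.succAbove]
  refine ⟨S, Sᵀ, by simp [hS], by simp [hS], ?_⟩
  ext i j
  fin_cases i <;> fin_cases j <;>
    simp [S, relationMatrix, interleave, Matrix.mul_apply, Fin.sum_univ_four] <;> ring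

theorem unimodularEquiv_relationMatrix_diagonal {a b c x y : R}
    (h : UnimodularEquiv !![a, c; 0, b] (diagonal ![x, y])) :
    UnimodularEquiv (relationMatrix a b c) (diagonal ![x, x, y, y]) := by
  have diagonal_eq : (fromBlocks (diagonal ![x, y]) 0 0 (diagonal ![x, y])ᵀ).submatrix
      interleave interleave = diagonal ![x, x, y, y] := by
    rw [diagonal_transpose, fromBlocks_diagonal, submatrix_diagonal_equiv]
    congr 1
    ext i
    fin_cases i <;> rfl
  rw [← diagonal_eq]
  exact (unimodularEquiv_relationMatrix a b c).trans
    ((h.fromBlocks_skew.trans (.fromBlocks_skew_diag _)).submatrix _ _)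

end RelationMatrix

theorem stmt_10_general {R : Type*} [CommRing R] [IsDomain R] [IsPrincipalIdealRing R]
    [NormalizedGCDMonoid R] {a b c h₂ : R} (ha : a ≠ 0) (hh₂ : gcd (gcd a b) c * h₂ = a * b) :
    let B : Matrix (Fin 4) (Fin 4) R :=
      !![0, -a, c, -a - c;
         a, 0, -c, a + c;
         -c, c, 0, -b;
         a + c, -a - c, b, 0]
    let h₁ : R := gcd (gcd a b) c
    (Finset.univ.gcd (fun p : Fin 4 × Fin 4 => B p.1 p.2) = h₁) ∧
    Associated
      (Finset.univ.gcd (fun p : Fin 4 × Fin 4 =>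
        (B.submatrix p.1.succAbove p.2.succAbove).det))
      (a * b * h₁) ∧
    (∃ P Q : Matrix (Fin 4) (Fin 4) R, IsUnit P.det ∧ IsUnit Q.det ∧
      P * B * Q = Matrix.diagonal ![h₁, h₁, h₂, h₂]) := by
  intro B h₁
  have hB : UnimodularEquiv B (diagonal ![h₁, h₁, h₂, h₂]) :=
    unimodularEquiv_relationMatrix_diagonal (unimodularEquiv_triangular ha hh₂)
  have h₁_dvd_a : h₁ ∣ a := (gcd_dvd_left _ _).trans (gcd_dvd_left _ _)
  have h₁_dvd_b : h₁ ∣ b := (gcd_dvd_left _ _).trans (gcd_dvd_right _ _)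
  have h₁_dvd_h₂ : h₁ ∣ h₂ := (mul_dvd_mul_iff_left (ne_zero_of_dvd_ne_zero ha h₁_dvd_a)).1
    (hh₂ ▸ mul_dvd_mul h₁_dvd_a h₁_dvd_b)
  refine ⟨?_, ?_, hB⟩
  · rw [hB.gcd_entries_eq_normalize (i := 0) (by simp [Fin.forall_fin_succ, h₁_dvd_h₂])]
    exact normalize_gcd _ _
  · exact hh₂ ▸ hB.associated_gcd_minors h₁_dvd_h₂

theorem stmt_10 (a b c : ℤ) (ha : a ≠ 0) (hb : b ≠ 0) :
    let B : Matrix (Fin 4) (Fin 4) ℤ :=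
      !![0, -a, c, -a - c;
         a, 0, -c, a + c;
         -c, c, 0, -b;
         a + c, -a - c, b, 0]
    let h1 : ℤ := Int.gcd (Int.gcd a b) c
    let h2 : ℤ := a * b / Int.gcd (Int.gcd a b) c
    -- the gcd of all entries of B is gcd(a, b, c)
    (Finset.univ.gcd (fun p : Fin 4 × Fin 4 => B p.1 p.2) = h1) ∧
    -- the gcd of all 3×3 minors of B is a*b*gcd(a,b,c) (up to units)
    Associated
      (Finset.univ.gcd (fun p : Fin 4 × Fin 4 =>
        (B.submatrix p.1.succAbove p.2.succAbove).det))
      (a * b * h1) ∧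
    -- the invariant factors of B are h1, h1, h2, h2
    (∃ P Q : Matrix (Fin 4) (Fin 4) ℤ, IsUnit P.det ∧ IsUnit Q.det ∧
      P * B * Q = Matrix.diagonal ![h1, h1, h2, h2]) := by
  have hdvd : (Int.gcd (Int.gcd a b) c : ℤ) ∣ a * b :=
    ((Int.gcd_dvd_left _ _).trans (Int.gcd_dvd_left _ _)).mul_right b
  simpa only [Int.coe_gcd] using stmt_10_general ha (Int.mul_ediv_cancel' hdvd)
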